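/- Let n ∈ ℕ and let M be the (n+2)×(n+2) symmetric integer tridiagonal matrix indexed by 0, 1, ..., n+1 with M 0 0 = M (n+1) (n+1) = -3, M i i = -2 for 1 ≤ i ≤ n, M i (i+1) = M (i+1) i = 1 for 0 ≤ i ≤ n, and all other entries 0. Let c ∈ ℚ^{n+2} be the vector with c 0 = c (n+1) = 1 and all other entries 0 (this is c i = -2 - M i i for genera p ≡ 0). Then M is negative definite and -cᵀ M⁻¹ c = 1 for every n. -/

import Mathlib

open Matrix Finset

/-- A symmetric quadratic form, written through its row sums and the squared differences. -/
theorem dotProduct_mulVec_eq_rowSum_sub_sq {ι K : Type*} [Fintype ι] [Field K] [CharZero K]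
    {A : Matrix ι ι K} (hA : ∀ i j, A i j = A j i) (x : ι → K) :
    x ⬝ᵥ (A *ᵥ x) =
      ∑ i, (∑ j, A i j) * x i ^ 2 - (∑ i, ∑ j, A i j * (x i - x j) ^ 2) / 2 := by
  have hswap : ∑ i, ∑ j, A i j * x j ^ 2 = ∑ i, ∑ j, A i j * x i ^ 2 := by
    rw [Finset.sum_comm]
    exact Finset.sum_congr rfl fun i _ => Finset.sum_congr rfl fun j _ => by rw [hA]
  have hexp : ∑ i, ∑ j, A i j * (x i - x j) ^ 2 =
      ∑ i, ∑ j, A i j * x i ^ 2 + ∑ i, ∑ j, A i j * x j ^ 2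
        - 2 * ∑ i, ∑ j, x i * (A i j * x j) := by
    simp only [Finset.mul_sum, ← Finset.sum_add_distrib, ← Finset.sum_sub_distrib]
    exact Finset.sum_congr rfl fun i _ => Finset.sum_congr rfl fun j _ => by ring
  simp only [dotProduct, mulVec, Finset.mul_sum, Finset.sum_mul]
  rw [hexp, hswap]
  ring

/-- The intersection matrix of the chain of `n` curves of self-intersection `-2` with a curve of
self-intersection `-3` attached at each end. -/
def chainMatrix (n : ℕ) (K : Type*) [Ring K] : Matrix (Fin (n + 2)) (Fin (n + 2)) K :=
  fun i j =>
    if i = j then (if (i : ℕ) = 0 ∨ (i : ℕ) = n + 1 then -3 else -2)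
    else if (i : ℕ) + 1 = (j : ℕ) ∨ (j : ℕ) + 1 = (i : ℕ) then 1 else 0

theorem chainMatrix_symm (n : ℕ) (K : Type*) [Ring K] (i j : Fin (n + 2)) :
    chainMatrix n K i j = chainMatrix n K j i := by
  unfold chainMatrix
  grind

theorem chainMatrix_map_intCast (n : ℕ) (K : Type*) [Ring K] :
    (chainMatrix n ℤ).map (Int.cast : ℤ → K) = chainMatrix n K := by
  ext i j
  simp only [chainMatrix, Matrix.map_apply]
  split_ifs <;> simp

theorem sum_chainMatrix_row (n : ℕ) (K : Type*) [Ring K] (i : Fin (n + 2)) :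
    ∑ j, chainMatrix n K i j = if (i : ℕ) = 0 ∨ (i : ℕ) = n + 1 then -2 else 0 := by
  have hsplit : ∀ j, chainMatrix n K i j =
      (if i = j then (if (i : ℕ) = 0 ∨ (i : ℕ) = n + 1 then -3 else -2) else 0)
        + (if (i : ℕ) + 1 = (j : ℕ) then 1 else 0)
        + (if (j : ℕ) + 1 = (i : ℕ) then 1 else 0) := by
    intro j
    have hij : i = j ↔ (i : ℕ) = j := Fin.ext_iff
    unfold chainMatrix
    split_ifs <;> first | omega | simp
  have hsucc : ∑ j : Fin (n + 2), (if (i : ℕ) + 1 = (j : ℕ) then (1 : K) else 0) =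
      if (i : ℕ) = n + 1 then 0 else 1 := by
    split_ifs with h
    · exact Finset.sum_eq_zero fun j _ => if_neg (by omega)
    · rw [Finset.sum_eq_single ⟨i + 1, by omega⟩] <;> simp [Fin.ext_iff]
      intro b hb hb'
      exact absurd hb'.symm hb
  have hpred : ∑ j : Fin (n + 2), (if (j : ℕ) + 1 = (i : ℕ) then (1 : K) else 0) =
      if (i : ℕ) = 0 then 0 else 1 := by
    split_ifs with h
    · exact Finset.sum_eq_zero fun j _ => if_neg (by omega)
    · rw [Finset.sum_eq_single ⟨i - 1, by omega⟩]
      · exact if_pos (by simp only; omega)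
      · intro b _ hb
        exact if_neg fun h' => hb (Fin.ext (by simp only; omega))
      · simp
  simp only [hsplit, Finset.sum_add_distrib, hsucc, hpred, Finset.sum_ite_eq, Finset.mem_univ,
    if_true]
  split_ifs <;> first | omega | norm_num

theorem chainMatrix_dotProduct_mulVec_neg (n : ℕ) {K : Type*} [Field K] [LinearOrder K]
    [IsStrictOrderedRing K] {x : Fin (n + 2) → K} (hx : x ≠ 0) :
    x ⬝ᵥ (chainMatrix n K *ᵥ x) < 0 := by
  rw [dotProduct_mulVec_eq_rowSum_sub_sq (chainMatrix_symm n K)]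
  simp only [sum_chainMatrix_row]
  have hrow : ∀ i ∈ (univ : Finset (Fin (n + 2))),
      (if (i : ℕ) = 0 ∨ (i : ℕ) = n + 1 then (-2 : K) else 0) * x i ^ 2 ≤ 0 := by
    intro i _
    split_ifs
    · nlinarith [sq_nonneg (x i)]
    · simp
  have hsq : ∀ i j, 0 ≤ chainMatrix n K i j * (x i - x j) ^ 2 := by
    intro i j
    by_cases hij : i = j
    · simp [hij]
    · refine mul_nonneg ?_ (sq_nonneg _)
      rw [chainMatrix, if_neg hij]
      split_ifs <;> simp
  have hsq' : ∀ i ∈ (univ : Finset (Fin (n + 2))),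
      0 ≤ ∑ j, chainMatrix n K i j * (x i - x j) ^ 2 :=
    fun i _ => Finset.sum_nonneg fun j _ => hsq i j
  have hrow_sum := Finset.sum_nonpos hrow
  have hsq_sum := Finset.sum_nonneg hsq'
  by_contra! hcon
  have hrow_zero := (Finset.sum_eq_zero_iff_of_nonpos hrow).1 (by linarith)
  have hsq_zero := (Finset.sum_eq_zero_iff_of_nonneg hsq').1 (by linarith)
  have hstep : ∀ (k : ℕ) (hk : k < n + 2), x ⟨k, hk⟩ = 0 := by
    intro k
    induction k with
    | zero =>
      intro hk
      simpa using hrow_zero ⟨0, hk⟩ (mem_univ _)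
    | succ k ih =>
      intro hk
      have h := (Finset.sum_eq_zero_iff_of_nonneg fun j _ => hsq ⟨k, by omega⟩ j).1
        (hsq_zero ⟨k, by omega⟩ (mem_univ _)) ⟨k + 1, hk⟩ (mem_univ _)
      simpa [chainMatrix, ih (by omega)] using h
  exact hx (funext fun i => hstep i i.2)

theorem isUnit_det_chainMatrix (n : ℕ) : IsUnit (chainMatrix n ℚ).det := by
  rw [isUnit_iff_ne_zero]
  intro hdet
  obtain ⟨v, hv, hMv⟩ := Matrix.exists_mulVec_eq_zero_iff.2 hdet
  have h := chainMatrix_dotProduct_mulVec_neg n hv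
  simp [hMv] at h

/-- **Example 3.1.** For the chain of `n` rational `(-2)`-curves with a rational `(-3)`-curve
attached at each end, the intersection matrix is negative definite and `-K² = -cᵀ M⁻¹ c = 1`
for every `n`. -/
theorem negK2_two_three_curves_chain (n : ℕ)
    (M : Matrix (Fin (n + 2)) (Fin (n + 2)) ℤ)
    (hM : M = fun i j : Fin (n + 2) =>
      if i = j then (if (i : ℕ) = 0 ∨ (i : ℕ) = n + 1 then -3 else -2)
      else if (i : ℕ) + 1 = (j : ℕ) ∨ (j : ℕ) + 1 = (i : ℕ) then 1 else 0)
    (c : Fin (n + 2) → ℚ)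
    (hc : c = fun i : Fin (n + 2) => if (i : ℕ) = 0 ∨ (i : ℕ) = n + 1 then 1 else 0) :
    (∀ x : Fin (n + 2) → ℝ, x ≠ 0 → x ⬝ᵥ ((M.map (Int.cast : ℤ → ℝ)) *ᵥ x) < 0) ∧
    - (c ⬝ᵥ ((M.map (Int.cast : ℤ → ℚ))⁻¹ *ᵥ c)) = 1 := by
  subst hM hc
  change (∀ x : Fin (n + 2) → ℝ, x ≠ 0 → x ⬝ᵥ (((chainMatrix n ℤ).map Int.cast) *ᵥ x) < 0) ∧
    - (_ ⬝ᵥ (((chainMatrix n ℤ).map (Int.cast : ℤ → ℚ))⁻¹ *ᵥ _)) = 1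
  rw [chainMatrix_map_intCast, chainMatrix_map_intCast]
  refine ⟨fun x hx => chainMatrix_dotProduct_mulVec_neg n hx, ?_⟩
  set c : Fin (n + 2) → ℚ := fun i => if (i : ℕ) = 0 ∨ (i : ℕ) = n + 1 then 1 else 0 with hc
  have hker : chainMatrix n ℚ *ᵥ (fun _ => -1 / 2) = c := by
    ext i
    simp only [mulVec, dotProduct, ← Finset.sum_mul, sum_chainMatrix_row, hc]
    split_ifs <;> norm_num
  have hinv : (chainMatrix n ℚ)⁻¹ *ᵥ c = fun _ => -1 / 2 := by
    rw [← hker, mulVec_mulVec, nonsing_inv_mul _ (isUnit_det_chainMatrix n), one_mulVec]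
  have hsum : ∑ i, c i = 2 := by
    rw [Fin.sum_univ_succ, Fin.sum_univ_castSucc]
    have hzero : ∑ i : Fin n, c i.castSucc.succ = 0 :=
      Finset.sum_eq_zero fun i _ => if_neg (by simp; omega)
    rw [hzero]
    simp [hc]
    norm_num
  rw [hinv]
  simp only [dotProduct, ← Finset.sum_mul, hsum]
  norm_num
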